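/- arXiv:2207.14609 — 2 statements merged into one kernel-verified Lean document; each statement's English description precedes it below -/
import Mathlib

section
/- Let n₁ ≥ 1, n₂ ≥ 2 and n₃ ≥ log₂(n₁ + (n₁+1)·n₂), and set N = n₂·n₃ + n₁·n₂ + n₁ + n₂ + n₃. Then for any N pairwise distinct real numbers y₁ < y₂ < … < y_N there exists a function f₄ ∈ Y_{n₁,n₂,n₃} (a three-hidden-layer ReLU network) that possesses all of y₁, …, y_N as breakpoints; in particular, f₄ is not differentiable at each of the points y₁, …, y_N. -/
/-- The ReLU function `σ(x) = max(x,0)`. -/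
noncomputable def relu (x : ℝ) : ℝ := max x 0

/-- `f` belongs to the three-hidden-layer ReLU network class `Y_{n₁,n₂,n₃}`. -/
def IsReLU3 (n1 n2 n3 : ℕ) (f : ℝ → ℝ) : Prop :=
  ∃ (a1 b1 : Fin n1 → ℝ) (a2 : Fin n2 → Fin n1 → ℝ) (c2 b2 : Fin n2 → ℝ)
    (a3 : Fin n3 → Fin n2 → ℝ) (c3 b3 : Fin n3 → ℝ) (a4 : Fin n3 → ℝ) (c4 b4 : ℝ),
    ∀ t, f t = c4 * t + b4 +
      ∑ r, a4 r * relu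
        ((∑ j, a3 r j * relu ((∑ k, a2 j k * relu (a1 k * t + b1 k)) + c2 j * t + b2 j))
          + c3 r * t + b3 r)

lemma diff_congr {f g : ℝ → ℝ} {p : ℝ} (hf : DifferentiableAt ℝ f p) (h : ∀ t, g t = f t) :
    DifferentiableAt ℝ g p := by
  rwa [show g = f from funext h]

lemma relu_cont : Continuous relu := by unfold relu; fun_prop

lemma relu_ev_pos {g : ℝ → ℝ} {p : ℝ} (hg : ContinuousAt g p) (h : 0 < g p) :
    (fun t => relu (g t)) =ᶠ[nhds p] g := by
  filter_upwards [hg.eventually (lt_mem_nhds h)] with t ht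
  exact max_eq_left ht.le

lemma relu_ev_neg {g : ℝ → ℝ} {p : ℝ} (hg : ContinuousAt g p) (h : g p < 0) :
    (fun t => relu (g t)) =ᶠ[nhds p] (fun _ => 0) := by
  filter_upwards [hg.eventually (gt_mem_nhds h)] with t ht
  exact max_eq_right (le_of_lt ht)

lemma relu_diff {g : ℝ → ℝ} {p : ℝ} (hg : DifferentiableAt ℝ g p) (h : g p ≠ 0) :
    DifferentiableAt ℝ (fun t => relu (g t)) p := by
  rcases lt_or_gt_of_ne h with h | h
  · exact (differentiableAt_const 0).congr_of_eventuallyEq (relu_ev_neg hg.continuousAt h)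
  · exact hg.congr_of_eventuallyEq (relu_ev_pos hg.continuousAt h)

lemma relu_nondiff (s p : ℝ) (hs : s ≠ 0) :
    ¬ DifferentiableAt ℝ (fun t => relu (s * (t - p))) p := by
  intro h
  have h2 : DifferentiableAt ℝ (fun u : ℝ => relu (s * ((p + u / s) - p))) 0 := by
    have : DifferentiableAt ℝ (fun u : ℝ => p + u / s) 0 := by fun_prop
    have h' : DifferentiableAt ℝ (fun t => relu (s * (t - p))) ((fun u : ℝ => p + u / s) 0) := by
      simpa using h
    exact DifferentiableAt.comp (0 : ℝ) h' this
  apply not_differentiableAt_abs_zero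
  have h3 : DifferentiableAt ℝ (fun u : ℝ => 2 * relu (s * ((p + u / s) - p)) - u) 0 :=
    (h2.const_mul 2).sub differentiableAt_id
  refine diff_congr h3 fun u => ?_
  have : s * ((p + u / s) - p) = u := by field_simp; ring
  rw [this]
  unfold relu
  rcases le_total 0 u with hu | hu
  · rw [max_eq_left hu, abs_of_nonneg hu]; ring
  · rw [max_eq_right hu, abs_of_nonpos hu]; ring

/-- flipping the sign -/
lemma relu_flip {h : ℝ → ℝ} {p : ℝ} (h1 : DifferentiableAt ℝ (fun t => relu (h t)) p)
    (h2 : DifferentiableAt ℝ (fun t => relu (-h t)) p) : DifferentiableAt ℝ h p := by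
  refine diff_congr (h1.sub h2) fun t => ?_
  simp only [relu, Pi.sub_apply]
  rcases le_total 0 (h t) with hu | hu
  · rw [max_eq_left hu, max_eq_right (by linarith)]; ring
  · rw [max_eq_right hu, max_eq_left (by linarith)]; ring

/-- slopes of a zigzag function with zeros `z` and kinks `x` -/
noncomputable def slp (z x : ℕ → ℝ) : ℕ → ℝ
  | 0 => 1
  | m + 1 => -slp z x m * (x m - z m) / (z (m + 1) - x m)

noncomputable def zig (z x : ℕ → ℝ) (m : ℕ) (t : ℝ) : ℝ :=
  t - z 0 + ∑ k ∈ Finset.range m, (slp z x (k + 1) - slp z x k) * relu (t - x k)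

section
variable {z x : ℕ → ℝ}

lemma x_mono (hzx : ∀ m, z m < x m) (hxz : ∀ m, x m < z (m + 1))
    : StrictMono x := strictMono_nat_of_lt_succ fun m => (hxz m).trans (hzx _)

lemma slp_sign (hzx : ∀ m, z m < x m) (hxz : ∀ m, x m < z (m + 1))
    (m : ℕ) : 0 < (-1) ^ m * slp z x m := by
  induction m with
  | zero => simp [slp]
  | succ m ih =>
    have h1 := sub_pos.2 (hzx m)
    have h2 := sub_pos.2 (hxz m)
    have : (-1) ^ (m + 1) * slp z x (m + 1)
      = ((-1) ^ m * slp z x m) * ((x m - z m) / (z (m + 1) - x m)) := by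
      simp only [slp]; ring
    rw [this]; positivity

lemma slp_ne (hzx : ∀ m, z m < x m) (hxz : ∀ m, x m < z (m + 1))
    (m : ℕ) : slp z x m ≠ 0 := by
  intro h
  have := slp_sign hzx hxz m
  simp [h] at this

lemma jump_sign (hzx : ∀ m, z m < x m) (hxz : ∀ m, x m < z (m + 1))
    (m : ℕ) : 0 < (-1) ^ (m + 1) * (slp z x (m + 1) - slp z x m) := by
  have h1 := slp_sign hzx hxz m
  have h2 := slp_sign hzx hxz (m + 1)
  have : (-1) ^ (m + 1) * (slp z x (m + 1) - slp z x m)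
    = (-1) ^ (m + 1) * slp z x (m + 1) + (-1) ^ m * slp z x m := by ring
  rw [this]; positivity

lemma zig_right (hzx : ∀ m, z m < x m) (hxz : ∀ m, x m < z (m + 1))
    (m : ℕ) (t : ℝ) (ht : ∀ k < m, x k ≤ t) :
    zig z x m t = slp z x m * (t - z m) := by
  induction m with
  | zero => simp [zig, slp]
  | succ m ih =>
    have e : zig z x (m + 1) t = zig z x m t + (slp z x (m + 1) - slp z x m) * relu (t - x m) := by
      simp only [zig, Finset.sum_range_succ]; ring
    have h3 : relu (t - x m) = t - x m := max_eq_left (sub_nonneg.2 (ht m (by omega)))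
    rw [e, h3, ih (fun k hk => ht k (by omega))]
    have h2 := sub_pos.2 (hxz m)
    simp only [slp]
    field_simp
    ring

lemma zig_piece (hzx : ∀ m, z m < x m) (hxz : ∀ m, x m < z (m + 1))
    (m i : ℕ) (hi : i ≤ m) (t : ℝ) (h1 : ∀ k < i, x k ≤ t) (h2 : t ≤ x i) :
    zig z x m t = slp z x i * (t - z i) := by
  rw [← zig_right hzx hxz i t h1]
  obtain ⟨d, rfl⟩ := Nat.exists_eq_add_of_le hi
  simp only [zig, Finset.sum_range_add]
  rw [Finset.sum_eq_zero (s := Finset.range d), add_zero]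
  intro k _
  have : x i ≤ x (i + k) := (x_mono hzx hxz).monotone (by omega)
  rw [show relu (t - x (i + k)) = 0 from max_eq_right (by linarith), mul_zero]

lemma zig_at (hzx : ∀ m, z m < x m) (hxz : ∀ m, x m < z (m + 1))
    (m i : ℕ) (hi : i ≤ m) (t : ℝ) (h1 : z i ≤ t) (h2 : t ≤ x i) :
    zig z x m t = slp z x i * (t - z i) := by
  refine zig_piece hzx hxz m i hi t (fun k hk => ?_) h2
  have : x k < z (k + 1) := hxz k
  rcases Nat.lt_or_ge (k + 1) i with h | h
  · have := x_mono hzx hxz h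
    obtain ⟨i, rfl⟩ : ∃ i', i = i' + 1 := ⟨i - 1, by omega⟩
    have := hxz i
    have := (x_mono hzx hxz).monotone (show k ≤ i by omega)
    linarith
  · have : i = k + 1 := by omega
    subst this; linarith

lemma zig_near (hzx : ∀ m, z m < x m) (hxz : ∀ m, x m < z (m + 1))
    (m i : ℕ) (hi : i ≤ m) :
    zig z x m =ᶠ[nhds (z i)] fun t => slp z x i * (t - z i) := by
  rcases i with _ | i
  · filter_upwards [gt_mem_nhds (hzx 0)] with t ht
    exact zig_piece hzx hxz m 0 hi t (by simp) (le_of_lt ht)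
  · filter_upwards [gt_mem_nhds (hzx (i + 1)), lt_mem_nhds (hxz i)] with t ht ht'
    refine zig_piece hzx hxz m _ hi t (fun k hk => ?_) (le_of_lt ht)
    exact ((x_mono hzx hxz).monotone (show k ≤ i by omega)).trans (le_of_lt ht')
end

lemma relu_sub_diff {a p : ℝ} (h : p ≠ a) : DifferentiableAt ℝ (fun t => relu (t - a)) p :=
  relu_diff (by fun_prop) (sub_ne_zero.2 h)

lemma zig_cont (z x : ℕ → ℝ) (m : ℕ) : Continuous (zig z x m) := by
  have := relu_cont
  unfold zig
  fun_prop

lemma zig_diff (z x : ℕ → ℝ) (m : ℕ) (p : ℝ) (h : ∀ k < m, p ≠ x k) :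
    DifferentiableAt ℝ (zig z x m) p := by
  unfold zig
  refine DifferentiableAt.add (by fun_prop) ?_
  refine DifferentiableAt.fun_sum fun k hk => ?_
  exact (relu_sub_diff (h k (Finset.mem_range.1 hk))).const_mul _

lemma zig_jump (z x : ℕ → ℝ) (m k : ℕ) (hk : k < m) (hx : Function.Injective x) :
    DifferentiableAt ℝ
      (fun t => zig z x m t - (slp z x (k + 1) - slp z x k) * relu (t - x k)) (x k) := by
  have e : (fun t => zig z x m t - (slp z x (k + 1) - slp z x k) * relu (t - x k))
    = fun t => t - z 0 + ∑ i ∈ (Finset.range m).erase k,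
      (slp z x (i + 1) - slp z x i) * relu (t - x i) := by
    funext t
    rw [zig, ← Finset.add_sum_erase _ _ (Finset.mem_range.2 hk)]; ring
  rw [e]
  refine DifferentiableAt.add (by fun_prop) ?_
  refine DifferentiableAt.fun_sum fun i hi => ?_
  exact (relu_sub_diff (hx.ne (Finset.ne_of_mem_erase hi).symm)).const_mul _

/-- sign selection -/
lemma sign_select (n M : ℕ) (hM : 3 ≤ M) (hMn : M ≤ 2 ^ n) (bad : (Fin n → Bool) → ℕ → Prop)
    (huniq : ∀ m < M, ∀ e e', bad e m → bad e' m → e = e')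
    (h02 : ∀ e e', bad e 0 → bad e' 2 → e = e') :
    ∃ e, ∀ m < M, ¬ bad e m := by
  by_contra! hcon
  choose g hg hb using hcon
  have hmap : ∀ e ∈ (Finset.univ : Finset (Fin n → Bool)),
      (if g e = 2 then 0 else g e) ∈ (Finset.range M).erase 2 := by
    intro e _
    have := hg e
    simp only [Finset.mem_erase, Finset.mem_range]
    split_ifs <;> omega
  have hinj : Set.InjOn (fun e => if g e = 2 then 0 else g e)
      ((Finset.univ : Finset (Fin n → Bool)) : Set (Fin n → Bool)) := by
    intro e _ e' _ h
    have b1 := hb e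
    have b2 := hb e'
    simp only at h
    split_ifs at h with h1 h2 h2
    · exact huniq 2 (by omega) _ _ (h1 ▸ b1) (h2 ▸ b2)
    · rw [← h] at b2; exact (h02 _ _ b2 (h1 ▸ b1)).symm
    · rw [h] at b1; exact h02 _ _ b1 (h2 ▸ b2)
    · rw [h] at b1; exact huniq _ (hg e') _ _ b1 b2
  have := Finset.card_le_card_of_injOn _ hmap hinj
  rw [Finset.card_erase_of_mem (by simp; omega)] at this
  simp at this
  omega

/-- generic outer weights -/
lemma generic_comb (n N : ℕ) (g : Fin n → ℝ → ℝ) (y : Fin N → ℝ)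
    (h : ∀ i, ∃ r, ¬ DifferentiableAt ℝ (g r) (y i)) :
    ∃ a : Fin n → ℝ, ∀ i, ¬ DifferentiableAt ℝ (fun t => ∑ r, a r * g r t) (y i) := by
  classical
  let V : Fin N → Submodule ℝ (Fin n → ℝ) := fun i =>
    { carrier := {a | DifferentiableAt ℝ (fun t => ∑ r, a r * g r t) (y i)}
      add_mem' := by
        intro a b ha hb
        have := DifferentiableAt.add ha hb
        refine diff_congr this fun t => ?_
        simp [add_mul, Finset.sum_add_distrib]
      zero_mem' := by simp
      smul_mem' := by
        intro c a ha
        have := DifferentiableAt.const_mul ha c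
        refine diff_congr this fun t => ?_
        simp [Finset.mul_sum, mul_assoc] }
  have hV : ∀ i, V i ≠ ⊤ := by
    intro i htop
    obtain ⟨r, hr⟩ := h i
    have : Pi.single r (1 : ℝ) ∈ V i := by rw [htop]; trivial
    apply hr
    have h2 : DifferentiableAt ℝ (fun t => ∑ r', (Pi.single r (1 : ℝ) : Fin n → ℝ) r' * g r' t) (y i) := this
    refine diff_congr h2 fun t => ?_
    simp [Pi.single_apply]
  by_contra! hcon
  apply Subspace.biUnion_ne_univ_of_top_notMem (s := Finset.univ.image V)
  · simp only [Finset.mem_image, Finset.mem_univ, true_and, not_exists]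
    exact hV
  · rw [Set.eq_univ_iff_forall]
    intro a
    obtain ⟨i, hi⟩ := hcon a
    simp only [Set.mem_iUnion]
    exact ⟨V i, by simp, hi⟩

/-- interlacing conditions for the points -/
structure Lay (n2 n3 : ℕ) (z w : ℕ → ℕ → ℝ) (x Z : ℕ → ℝ) : Prop where
  z0 : ∀ j < n2, z j 0 = Z j
  Zx : Z n2 = x 0
  zx : ∀ j < n2, ∀ m, z j m < x m
  xz : ∀ j < n2, ∀ m, x m < z j (m + 1)
  wZ : ∀ r < n3, ∀ m, w r m < Z m
  Zw : ∀ r < n3, ∀ m, Z m < w r (m + 1)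
  zz : ∀ j < n2, ∀ j' < n2, j ≠ j' → ∀ k, z j k ≠ z j' k

noncomputable def phi (n1 : ℕ) (z : ℕ → ℕ → ℝ) (x : ℕ → ℝ) (j : ℕ) (t : ℝ) : ℝ :=
  (-1) ^ j * zig (z j) x n1 t

noncomputable def beta (w : ℕ → ℕ → ℝ) (Z : ℕ → ℝ) (r j : ℕ) : ℝ :=
  slp (w r) Z (j + 1) - slp (w r) Z j

noncomputable def hid (n1 n2 : ℕ) (z w : ℕ → ℕ → ℝ) (x Z : ℕ → ℝ) (r : ℕ) (t : ℝ) : ℝ :=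
  t - w r 0 + ∑ j ∈ Finset.range n2,
    beta w Z r j * (relu (phi n1 z x j t) + (if Even j then 0 else 1) * (t - Z j))

section
variable {n1 n2 n3 : ℕ} {z w : ℕ → ℕ → ℝ} {x Z : ℕ → ℝ}

lemma phi_cont (j : ℕ) : Continuous (phi n1 z x j) := by
  have := zig_cont (z j) x n1
  unfold phi
  fun_prop

lemma hid_cont (r : ℕ) : Continuous (hid n1 n2 z w x Z r) := by
  have h1 := relu_cont
  have h2 := fun j => phi_cont (n1 := n1) (z := z) (x := x) j
  unfold hid
  fun_prop

lemma hid_left (L : Lay n2 n3 z w x Z) (r : ℕ) (t : ℝ) (ht : t ≤ x 0) :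
    hid n1 n2 z w x Z r t = zig (w r) Z n2 t := by
  unfold hid zig
  congr 1
  refine Finset.sum_congr rfl fun j hj => ?_
  have hj := Finset.mem_range.1 hj
  unfold beta
  congr 1
  rw [phi, zig_piece (L.zx j hj) (L.xz j hj) n1 0 (Nat.zero_le _) t (by simp) ht, L.z0 j hj]
  simp only [slp, one_mul]
  split_ifs with he
  · rw [he.neg_one_pow]; simp
  · rw [(Nat.not_even_iff_odd.1 he).neg_one_pow]
    unfold relu
    rcases le_total 0 (t - Z j) with hu | hu
    · rw [max_eq_left hu, max_eq_right (by linarith)]; ring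
    · rw [max_eq_right hu, max_eq_left (by linarith)]; ring

lemma Z_le (L : Lay n2 n3 z w x Z) (h3 : 0 < n3) (m : ℕ) (hm : m ≤ n2) : Z m ≤ x 0 := by
  rw [← L.Zx]
  exact (x_mono (L.wZ 0 h3) (L.Zw 0 h3)).monotone hm

lemma hid_w (L : Lay n2 n3 z w x Z) (r : ℕ) (hr : r < n3) (i : ℕ) (hi : i ≤ n2) (e : ℝ)
    (he : e ≠ 0) : ¬ DifferentiableAt ℝ (fun t => relu (e * hid n1 n2 z w x Z r t)) (w r i) := by
  intro hd
  apply relu_nondiff (e * slp (w r) Z i) (w r i)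
    (mul_ne_zero he (slp_ne (L.wZ r hr) (L.Zw r hr) i))
  refine hd.congr_of_eventuallyEq ?_
  have hlt : w r i < x 0 := (L.wZ r hr i).trans_le (Z_le L (by omega) i hi)
  filter_upwards [gt_mem_nhds hlt, zig_near (L.wZ r hr) (L.Zw r hr) n2 i hi] with t h1 h2
  rw [hid_left L r t (le_of_lt h1), h2, mul_assoc]

lemma hid_sign (L : Lay n2 n3 z w x Z) (r : ℕ) (hr : r < n3) (m : ℕ) (hm : m ≤ n2)
    (he : Even m) : 0 < hid n1 n2 z w x Z r (Z m) := by
  rw [hid_left L r _ (Z_le L (by omega) m hm),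
    zig_at (L.wZ r hr) (L.Zw r hr) n2 m hm _ (L.wZ r hr m).le le_rfl]
  have h1 := slp_sign (L.wZ r hr) (L.Zw r hr) m
  rw [he.neg_one_pow, one_mul] at h1
  exact mul_pos h1 (sub_pos.2 (L.wZ r hr m))

lemma beta_sign (L : Lay n2 n3 z w x Z) (r : ℕ) (hr : r < n3) (j : ℕ) :
    0 < (-1) ^ (j + 1) * beta w Z r j := jump_sign (L.wZ r hr) (L.Zw r hr) j

lemma z_ne_x (L : Lay n2 n3 z w x Z) (j : ℕ) (hj : j < n2) (k i : ℕ) : z j k ≠ x i := by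
  have hm := x_mono (L.zx j hj) (L.xz j hj)
  rcases Nat.lt_or_ge i k with h | h
  · obtain ⟨k, rfl⟩ : ∃ k', k = k' + 1 := ⟨k - 1, by omega⟩
    have := hm.monotone (show i ≤ k by omega)
    have := L.xz j hj k
    exact ne_of_gt (by linarith)
  · have := hm.monotone h
    have := L.zx j hj k
    exact ne_of_lt (by linarith)

lemma hid_z (L : Lay n2 n3 z w x Z) (r : ℕ) (hr : r < n3) (j : ℕ) (hj : j < n2) (k : ℕ)
    (hk : k ≤ n1) : ¬ DifferentiableAt ℝ (hid n1 n2 z w x Z r) (z j k) := by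
  intro hd
  have hb : beta w Z r j ≠ 0 := by
    intro h
    have := beta_sign L r hr j
    simp [h] at this
  -- the other neurons are differentiable
  have ho : ∀ j' < n2, j' ≠ j → DifferentiableAt ℝ (fun t => relu (phi n1 z x j' t)) (z j k) := by
    intro j' hj' hne
    have hzd : DifferentiableAt ℝ (phi n1 z x j') (z j k) :=
      (zig_diff (z j') x n1 (z j k) (fun i _ => z_ne_x L j hj k i)).const_mul _
    refine relu_diff hzd ?_
    have h1 : zig (z j') x n1 (z j k) = slp (z j') x k * (z j k - z j' k) := by
      refine zig_piece (L.zx j' hj') (L.xz j' hj') n1 k hk _ (fun i hi => ?_) (L.zx j hj k).le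
      have := (x_mono (L.zx j hj) (L.xz j hj)).monotone (show i ≤ k - 1 by omega)
      have := L.xz j hj (k - 1)
      rw [show k - 1 + 1 = k by omega] at this
      linarith
    rw [phi, h1]
    refine mul_ne_zero (by simp) (mul_ne_zero (slp_ne (L.zx j' hj') (L.xz j' hj') k) ?_)
    exact sub_ne_zero.2 (L.zz j hj j' hj' hne.symm k)
  have hrest : DifferentiableAt ℝ (fun t => ∑ j' ∈ (Finset.range n2).erase j,
      beta w Z r j' * (relu (phi n1 z x j' t) + (if Even j' then 0 else 1) * (t - Z j')))
      (z j k) := by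
    refine DifferentiableAt.fun_sum fun j' hj' => ?_
    obtain ⟨h1, h2⟩ := Finset.mem_erase.1 hj'
    exact ((ho j' (Finset.mem_range.1 h2) h1).add (by fun_prop)).const_mul _
  have hlin : DifferentiableAt ℝ (fun t => t - w r 0 +
      beta w Z r j * ((if Even j then 0 else 1) * (t - Z j))) (z j k) := by fun_prop
  have hj1 : DifferentiableAt ℝ (fun t => relu (phi n1 z x j t)) (z j k) := by
    refine diff_congr (((hd.sub hrest).sub hlin).const_mul (beta w Z r j)⁻¹) fun t => ?_
    simp only [Pi.sub_apply]
    rw [hid, ← Finset.add_sum_erase _ _ (Finset.mem_range.2 hj)]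
    field_simp
    ring
  apply relu_nondiff ((-1) ^ j * slp (z j) x k) (z j k)
    (mul_ne_zero (by simp) (slp_ne (L.zx j hj) (L.xz j hj) k))
  refine hj1.congr_of_eventuallyEq ?_
  filter_upwards [zig_near (L.zx j hj) (L.xz j hj) n1 k hk] with t ht
  rw [phi, ht, mul_assoc]

lemma hid_x (L : Lay n2 n3 z w x Z) (h2 : 2 ≤ n2) (r : ℕ) (hr : r < n3) (k : ℕ)
    (hk : k < n1) : ¬ DifferentiableAt ℝ (hid n1 n2 z w x Z r) (x k) := by
  intro hd
  have hinj : Function.Injective x := (x_mono (L.zx 0 (by omega)) (L.xz 0 (by omega))).injective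
  -- slope jump of neuron `j`
  let J : ℕ → ℝ := fun j => if Even (j + k) then
    (-1) ^ j * (slp (z j) x (k + 1) - slp (z j) x k) else 0
  have hJ : ∀ j < n2, DifferentiableAt ℝ
      (fun t => relu (phi n1 z x j t) - J j * relu (t - x k)) (x k) := by
    intro j hj
    have hval : phi n1 z x j (x k) = ((-1) ^ (j + k)) *
        (((-1) ^ k * slp (z j) x k) * (x k - z j k)) := by
      rw [phi, zig_at (L.zx j hj) (L.xz j hj) n1 k hk.le _ (L.zx j hj k).le le_rfl]
      have : ((-1 : ℝ) ^ k) * (-1) ^ k = 1 := by rw [← mul_pow]; simp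
      rw [pow_add]
      linear_combination (-(-1) ^ j * slp (z j) x k * (x k - z j k)) * this
    have hpos : 0 < ((-1) ^ k * slp (z j) x k) * (x k - z j k) :=
      mul_pos (slp_sign (L.zx j hj) (L.xz j hj) k) (sub_pos.2 (L.zx j hj k))
    by_cases he : Even (j + k)
    · rw [he.neg_one_pow, one_mul] at hval
      have h1 : DifferentiableAt ℝ (fun t => phi n1 z x j t - J j * relu (t - x k)) (x k) := by
        refine diff_congr ((zig_jump (z j) x n1 k hk hinj).const_mul ((-1) ^ j)) fun t => ?_
        simp only [J, if_pos he, phi]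
        ring
      refine h1.congr_of_eventuallyEq ?_
      filter_upwards [relu_ev_pos (phi_cont (n1 := n1) (z := z) (x := x) j).continuousAt
        (by rw [hval]; exact hpos)] with t ht
      rw [ht]
    · rw [(Nat.not_even_iff_odd.1 he).neg_one_pow] at hval
      refine (differentiableAt_const 0).congr_of_eventuallyEq ?_
      filter_upwards [relu_ev_neg (phi_cont (n1 := n1) (z := z) (x := x) j).continuousAt
        (by rw [hval]; linarith)] with t ht
      rw [ht]; simp [J, he]
  have hS : 0 < (-1) ^ k * ∑ j ∈ Finset.range n2, beta w Z r j * J j := by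
    rw [Finset.mul_sum]
    have hterm : ∀ j < n2, Even (j + k) → 0 < (-1) ^ k * (beta w Z r j * J j) := by
      intro j hj he
      have h1 := beta_sign L r hr j
      have h2 := jump_sign (L.zx j hj) (L.xz j hj) k
      have h3 := mul_pos h1 h2
      simp only [J, if_pos he]
      have e : (-1 : ℝ) ^ j * (-1) ^ k = 1 := by rw [← pow_add, he.neg_one_pow]
      have e2 : ((-1 : ℝ) ^ j) * (-1) ^ j = 1 := by rw [← mul_pow]; simp
      have : (-1 : ℝ) ^ k = (-1) ^ j := by linear_combination (-1) ^ j * e - (-1) ^ k * e2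
      rw [pow_succ, pow_succ, this] at h3
      rw [this]
      linarith
    apply Finset.sum_pos'
    · intro j hj
      by_cases he : Even (j + k)
      · exact (hterm j (Finset.mem_range.1 hj) he).le
      · simp [J, he]
    · refine ⟨k % 2, Finset.mem_range.2 (by omega), hterm _ (by omega) ?_⟩
      rw [Nat.even_iff]; omega
  have hrest : DifferentiableAt ℝ (fun t => ∑ j ∈ Finset.range n2,
      beta w Z r j * ((relu (phi n1 z x j t) - J j * relu (t - x k))
        + (if Even j then 0 else 1) * (t - Z j))) (x k) := by
    refine DifferentiableAt.fun_sum fun j hj => ?_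
    exact ((hJ j (Finset.mem_range.1 hj)).add (by fun_prop)).const_mul _
  have hlin : DifferentiableAt ℝ (fun t => t - w r 0) (x k) := by fun_prop
  set S := ∑ j ∈ Finset.range n2, beta w Z r j * J j with hSdef
  have hS0 : S ≠ 0 := by intro h; simp [h] at hS
  apply relu_nondiff 1 (x k) one_ne_zero
  refine diff_congr (((hd.sub hrest).sub hlin).const_mul S⁻¹) fun t => ?_
  simp only [Pi.sub_apply, one_mul]
  rw [eq_inv_mul_iff_mul_eq₀ hS0, hid, add_sub_assoc, ← Finset.sum_sub_distrib, hSdef,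
    Finset.sum_mul]
  have : ∀ a b : ℝ, a + b - a = b := by intros; ring
  rw [this]
  refine Finset.sum_congr rfl fun j _ => ?_
  ring
end

lemma extend_mono (N : ℕ) (hN : 0 < N) (y : Fin N → ℝ) (hy : StrictMono y) :
    ∃ Y : ℕ → ℝ, StrictMono Y ∧ ∀ i : Fin N, Y i = y i := by
  refine ⟨fun i => if h : i < N then y ⟨i, h⟩ else y ⟨N - 1, by omega⟩ + ((i : ℝ) - N + 1),
    strictMono_nat_of_lt_succ fun i => ?_, fun i => by simp⟩
  by_cases h1 : i + 1 < N
  · have h2 : i < N := by omega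
    simp only [h1, h2, dif_pos]
    exact hy (by simp)
  · by_cases h2 : i < N
    · have : i = N - 1 := by omega
      simp only [h1, h2, dif_pos, dif_neg, not_false_eq_true]
      have h3 : ((i + 1 : ℕ) : ℝ) = N := by rw [this]; congr 1; omega
      rw [h3]
      have : (⟨i, h2⟩ : Fin N) = ⟨N - 1, by omega⟩ := by simp [this]
      rw [this]; linarith
    · simp only [h1, h2, dif_neg, not_false_eq_true]
      push_cast; linarith

noncomputable def zpt (n2 n3 : ℕ) (Y : ℕ → ℝ) (j : ℕ) : ℕ → ℝ
  | 0 => Y (j * (n3 + 1) + n3)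
  | k + 1 => Y (n2 * (n3 + 1) + n3 + k * (n2 + 1) + 1 + j)

lemma layout (n2 n3 : ℕ) (Y : ℕ → ℝ) (hY : StrictMono Y) :
    Lay n2 n3 (zpt n2 n3 Y) (fun r i => Y (i * (n3 + 1) + r))
      (fun k => Y (n2 * (n3 + 1) + n3 + k * (n2 + 1))) (fun i => Y (i * (n3 + 1) + n3)) where
  z0 j _ := rfl
  Zx := by simp
  zx j hj m := by
    rcases m with _ | m
    · apply hY
      have : j * (n3 + 1) < n2 * (n3 + 1) := Nat.mul_lt_mul_of_pos_right hj (by omega)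
      omega
    · apply hY
      rw [Nat.succ_mul m (n2 + 1)]
      omega
  xz j hj m := by apply hY; omega
  wZ r hr m := by apply hY; omega
  Zw r hr m := by apply hY; simp only [Nat.succ_mul m (n3 + 1)]; omega
  zz j hj j' hj' hne k := by
    rcases k with _ | k
    · apply hY.injective.ne
      intro h
      apply hne
      have h' : j * (n3 + 1) = j' * (n3 + 1) := by omega
      exact Nat.eq_of_mul_eq_mul_right (by omega) h'
    · apply hY.injective.ne; omega

lemma hid_net (n1 n2 n3 : ℕ) (z w : ℕ → ℕ → ℝ) (x Z : ℕ → ℝ) (s a : Fin n3 → ℝ) :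
    IsReLU3 n1 n2 n3 (fun t => ∑ r, a r * relu (s r * hid n1 n2 z w x Z r t)) := by
  refine ⟨fun _ => 1, fun k => -x k,
    fun j k => (-1) ^ (j : ℕ) * (slp (z j) x (k + 1) - slp (z j) x k),
    fun j => (-1) ^ (j : ℕ), fun j => -((-1) ^ (j : ℕ) * z j 0),
    fun r j => s r * beta w Z r j,
    fun r => s r * (1 + ∑ j ∈ Finset.range n2, beta w Z r j * (if Even j then 0 else 1)),
    fun r => s r * (-w r 0 - ∑ j ∈ Finset.range n2,
      beta w Z r j * (if Even j then 0 else 1) * Z j),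
    a, 0, 0, fun t => ?_⟩
  simp only [zero_mul, zero_add]
  refine Finset.sum_congr rfl fun r _ => ?_
  congr 2
  have hphi : ∀ j : Fin n2, (∑ k : Fin n1,
      (-1) ^ (j : ℕ) * (slp (z j) x (k + 1) - slp (z j) x k) * relu (1 * t + -x k))
      + (-1) ^ (j : ℕ) * t + -((-1) ^ (j : ℕ) * z j 0) = phi n1 z x j t := by
    intro j
    rw [phi, zig, Finset.sum_range, mul_add, Finset.mul_sum]
    have : ∀ k : Fin n1, (-1) ^ (j : ℕ) * (slp (z j) x (k + 1) - slp (z j) x k)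
      * relu (1 * t + -x k) = (-1) ^ (j : ℕ) * ((slp (z j) x (k + 1) - slp (z j) x k)
      * relu (t - x k)) := by
      intro k
      rw [one_mul, ← sub_eq_add_neg, mul_assoc]
    rw [Finset.sum_congr rfl fun k _ => this k]
    ring
  rw [Finset.sum_congr rfl fun j _ => by rw [hphi j]]
  rw [hid, ← Finset.sum_range (fun j => s r * beta w Z r j * relu (phi n1 z x j t))]
  have e : ∑ j ∈ Finset.range n2,
      beta w Z r j * (relu (phi n1 z x j t) + (if Even j then 0 else 1) * (t - Z j))
    = ∑ j ∈ Finset.range n2, beta w Z r j * relu (phi n1 z x j t)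
      + (∑ j ∈ Finset.range n2, beta w Z r j * (if Even j then 0 else 1)) * t
      - ∑ j ∈ Finset.range n2, beta w Z r j * (if Even j then 0 else 1) * Z j := by
    rw [Finset.sum_mul, ← Finset.sum_add_distrib, ← Finset.sum_sub_distrib]
    exact Finset.sum_congr rfl fun j _ => by ring
  have e2 : ∑ j ∈ Finset.range n2, s r * beta w Z r j * relu (phi n1 z x j t)
    = s r * ∑ j ∈ Finset.range n2, beta w Z r j * relu (phi n1 z x j t) := by
    rw [Finset.mul_sum]
    exact Finset.sum_congr rfl fun j _ => by ring
  rw [e, e2]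
  ring

/-- for `n₁ ≥ 1`, `n₂ ≥ 2`, `n₃ ≥ log₂(n₁ + (n₁+1)n₂)` and any
`N = n₂n₃ + n₁n₂ + n₁ + n₂ + n₃` prescribed pairwise distinct real numbers, there is a
three-hidden-layer network `f₄ ∈ Y_{n₁,n₂,n₃}` possessing all of them as breakpoints;
in particular `f₄` is not differentiable at each of them. -/
theorem three_layer_prescribed_breakpoints (n1 n2 n3 : ℕ)
    (hn1 : 1 ≤ n1) (hn2 : 2 ≤ n2)
    (hn3 : Real.logb 2 ((n1 : ℝ) + ((n1 : ℝ) + 1) * (n2 : ℝ)) ≤ (n3 : ℝ))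
    (y : Fin (n2 * n3 + n1 * n2 + n1 + n2 + n3) → ℝ) (hy : StrictMono y) :
    ∃ f : ℝ → ℝ, IsReLU3 n1 n2 n3 f ∧ ∀ i, ¬ DifferentiableAt ℝ f (y i) := by
  obtain ⟨Y, hY, hYy⟩ := extend_mono _ (by omega) y hy
  have hM : n1 + (n1 + 1) * n2 ≤ 2 ^ n3 := by
    have hpos : (0 : ℝ) < (n1 : ℝ) + ((n1 : ℝ) + 1) * (n2 : ℝ) := by
      have : (0 : ℝ) < n1 := by exact_mod_cast hn1
      positivity
    rw [Real.logb_le_iff_le_rpow (by norm_num) hpos, Real.rpow_natCast] at hn3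
    exact_mod_cast hn3
  have hM3 : 3 ≤ n1 + (n1 + 1) * n2 := by nlinarith
  have L := layout n2 n3 Y hY
  set z := zpt n2 n3 Y with hz
  set w : ℕ → ℕ → ℝ := fun r i => Y (i * (n3 + 1) + r) with hw
  set x : ℕ → ℝ := fun k => Y (n2 * (n3 + 1) + n3 + k * (n2 + 1)) with hx
  set Z : ℕ → ℝ := fun i => Y (i * (n3 + 1) + n3) with hZ
  let pt : ℕ → ℝ := fun m => if m < n2 + 1 then Z m
    else Y (n2 * (n3 + 1) + n3 + 1 + (m - (n2 + 1)))
  have hpt : ∀ m < n1 + (n1 + 1) * n2, ∀ r < n3,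
      ¬ DifferentiableAt ℝ (hid n1 n2 z w x Z r) (pt m) := by
    intro m hm r hr
    by_cases h1 : m < n2 + 1
    · simp only [pt, if_pos h1]
      rcases Nat.lt_or_ge m n2 with h2 | h2
      · exact L.z0 m h2 ▸ hid_z L r hr m h2 0 (Nat.zero_le _)
      · have : m = n2 := by omega
        rw [this, L.Zx]
        exact hid_x L hn2 r hr 0 (by omega)
    · simp only [pt, if_neg h1]
      obtain ⟨q, rfl⟩ : ∃ q, m = n2 + 1 + q := ⟨m - (n2 + 1), by omega⟩
      have hq : q + 1 < n1 * (n2 + 1) := by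
        have : (n1 + 1) * n2 = n1 * n2 + n2 := by ring
        have : n1 * (n2 + 1) = n1 * n2 + n1 := by ring
        omega
      have hd := Nat.div_add_mod q (n2 + 1)
      have hlt := Nat.mod_lt q (show 0 < n2 + 1 by omega)
      set k := q / (n2 + 1) with hkdef
      set j := q % (n2 + 1) with hjdef
      have hk : k < n1 := by
        rw [hkdef, Nat.div_lt_iff_lt_mul (by omega)]; omega
      rw [mul_comm] at hd
      have hidx : n2 * (n3 + 1) + n3 + 1 + (n2 + 1 + q - (n2 + 1))
        = n2 * (n3 + 1) + n3 + k * (n2 + 1) + 1 + j := by omega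
      rw [hidx]
      rcases Nat.lt_or_ge j n2 with h2 | h2
      · exact hid_z L r hr j h2 (k + 1) (by omega)
      · have hj : j = n2 := by omega
        have hk1 : k + 1 < n1 := by
          by_contra hcon
          have : k + 1 = n1 := by omega
          rw [← this, Nat.succ_mul] at hq
          omega
        have := hid_x L hn2 r hr (k + 1) hk1
        have hxe : Y (n2 * (n3 + 1) + n3 + k * (n2 + 1) + 1 + j) = x (k + 1) := by
          simp only [hx, Nat.succ_mul k (n2 + 1)]
          congr 1; omega
        rw [hxe]
        exact this
  let sg : Bool → ℝ := fun b => if b then 1 else -1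
  obtain ⟨e, he⟩ := sign_select n3 (n1 + (n1 + 1) * n2) hM3 hM
    (fun e m => ∀ r : Fin n3,
      DifferentiableAt ℝ (fun t => relu (sg (e r) * hid n1 n2 z w x Z r t)) (pt m))
    (by
      intro m hm e e' h1 h2
      funext r
      by_contra hne
      apply hpt m hm r r.2
      have h1 := h1 r
      have h2 := h2 r
      cases h3 : e r <;> cases h4 : e' r <;> simp [h3, h4] at hne <;>
        simp only [h3, h4, sg, if_true, one_mul, neg_one_mul, Bool.false_eq_true, if_false] at h1 h2
      · exact relu_flip h2 h1
      · exact relu_flip h1 h2)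
    (by
      have key : ∀ m ≤ n2, Even m → ∀ e : Fin n3 → Bool, (∀ r : Fin n3,
          DifferentiableAt ℝ (fun t => relu (sg (e r) * hid n1 n2 z w x Z r t)) (pt m)) →
          ∀ r, e r = false := by
        intro m hm hev e hb r
        by_contra hne
        have hb := hb r
        simp only [Bool.not_eq_false] at hne
        simp only [hne, sg, if_true, one_mul] at hb
        have hmM : m < n1 + (n1 + 1) * n2 := by nlinarith
        apply hpt m hmM r r.2
        have hptm : pt m = Z m := by simp only [pt]; rw [if_pos (by omega)]
        rw [hptm] at hb ⊢
        exact hb.congr_of_eventuallyEq (relu_ev_pos (hid_cont r).continuousAt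
          (hid_sign L r r.2 m hm hev)).symm
      intro e e' h1 h2
      funext r
      rw [key 0 (by omega) (by decide) e h1 r, key 2 hn2 (by decide) e' h2 r])
  obtain ⟨a, ha⟩ := generic_comb n3 _
    (fun r t => relu (sg (e r) * hid n1 n2 z w x Z r t)) y (by
      intro i
      rw [← hYy i]
      obtain ⟨p, hp⟩ := i
      simp only
      have viaM : ∀ m < n1 + (n1 + 1) * n2, Y p = pt m → ∃ r : Fin n3,
          ¬ DifferentiableAt ℝ (fun t => relu (sg (e r) * hid n1 n2 z w x Z r t)) (Y p) := by
        intro m hm h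
        have := he m hm
        rw [not_forall] at this
        rwa [h]
      have e1 : (n1 + 1) * n2 = n1 * n2 + n2 := by ring
      have e2 : n2 * (n3 + 1) = n2 * n3 + n2 := by ring
      by_cases hA : p < n2 * (n3 + 1) + n3 + 1
      · have hd := Nat.div_add_mod p (n3 + 1)
        have hlt := Nat.mod_lt p (show 0 < n3 + 1 by omega)
        have hi : p / (n3 + 1) < n2 + 1 := by
          rw [Nat.div_lt_iff_lt_mul (by omega), Nat.succ_mul]; omega
        rw [mul_comm] at hd
        rcases Nat.lt_or_ge (p % (n3 + 1)) n3 with h2 | h2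
        · refine ⟨⟨p % (n3 + 1), h2⟩, ?_⟩
          have := hid_w (n1 := n1) L _ h2 (p / (n3 + 1)) (by omega) (sg (e ⟨p % (n3 + 1), h2⟩))
            (by simp only [sg]; split_ifs <;> norm_num)
          simp only [hw, hd] at this
          exact this
        · apply viaM (p / (n3 + 1)) (by omega)
          simp only [pt, if_pos hi, hZ]
          congr 1; omega
      · apply viaM (n2 + 1 + (p - (n2 * (n3 + 1) + n3 + 1))) (by omega)
        simp only [pt]
        rw [if_neg (by omega)]
        congr 1; omega)
  exact ⟨_, hid_net n1 n2 n3 z w x Z (fun r => sg (e r)) a, ha⟩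
end

section
/- For L ≥ 2, every f_L ∈ Y_{n₁,…,n_{L−1}} can be equivalently represented in normalized form: there exist b^(1) ∈ ℝ^{n₁}, matrices A^(ℓ) ∈ ℝ^{n_ℓ×n_{ℓ−1}}, vectors b^(ℓ) ∈ ℝ^{n_ℓ}, sign vectors s^(ℓ) ∈ {−1, 0, 1}^{n_ℓ} for ℓ = 2, …, L−1, and A^(L) ∈ ℝ^{1×n_{L−1}}, c^(L), b^(L) ∈ ℝ such that, with F₁(t) = t·𝟙 + b^(1) (where 𝟙 = (1, …, 1)ᵀ ∈ ℝ^{n₁}) and F_ℓ(t) = A^(ℓ)·σ(F_{ℓ−1}(t)) + t·s^(ℓ) + b^(ℓ) for ℓ = 2, …, L−1, one has f_L(t) = A^(L)·σ(F_{L−1}(t)) + t·c^(L) + b^(L) for all t ∈ ℝ. -/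
/-- `f` belongs to the deep ReLU network class `Y_{n₁,…,n_{L−1}}` with `L−1` hidden
layers of widths `n 1, …, n (L−1)` (input and output dimension `1`). -/
def IsDeepReLU (L : ℕ) (n : ℕ → ℕ) (f : ℝ → ℝ) : Prop :=
  ∃ (F : (ℓ : ℕ) → ℝ → Fin (n ℓ) → ℝ)
    (A1 : Fin (n 1) → ℝ)
    (A : (ℓ : ℕ) → Fin (n ℓ) → Fin (n (ℓ - 1)) → ℝ)
    (b c : (ℓ : ℕ) → Fin (n ℓ) → ℝ)
    (AL : Fin (n (L - 1)) → ℝ) (cL bL : ℝ),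
    (∀ t i, F 1 t i = t * A1 i + b 1 i) ∧
    (∀ ℓ, 2 ≤ ℓ → ℓ ≤ L - 1 → ∀ t i,
      F ℓ t i = (∑ k, A ℓ i k * relu (F (ℓ - 1) t k)) + t * c ℓ i + b ℓ i) ∧
    (∀ t, f t = (∑ k, AL k * relu (F (L - 1) t k)) + t * cL + bL)

theorem relu_first_layer (a b : ℝ) :
    ∃ p q r β : ℝ, ∀ t, relu (t * a + b) = p * relu (t + β) + t * q + r := by
  rcases lt_trichotomy a 0 with h | h | h
  · refine ⟨-a, a, b, b / a, fun t => ?_⟩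
    have e : t * a + b = a * (t + b / a) := by
      rw [mul_add, mul_div_cancel₀ _ h.ne, mul_comm]
    have e2 : t * a + b = a * (t + b / a) := e
    rw [e]
    generalize hx : t + b / a = x at *
    unfold relu
    rcases le_total x 0 with hx0 | hx0
    · rw [max_eq_right hx0, max_eq_left (mul_nonneg_of_nonpos_of_nonpos h.le hx0)]
      linarith
    · rw [max_eq_left hx0, max_eq_right (mul_nonpos_of_nonpos_of_nonneg h.le hx0)]
      linarith
  · exact ⟨0, 0, relu b, 0, fun t => by simp [h]⟩
  · refine ⟨a, 0, 0, b / a, fun t => ?_⟩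
    have e : t * a + b = a * (t + b / a) := by field_simp
    rw [e]
    unfold relu
    rw [mul_max_of_nonneg _ _ h.le]
    simp

theorem relu_pos_mul (d x : ℝ) (h : 0 < d) : relu x = d * relu (x / d) := by
  unfold relu
  rw [mul_max_of_nonneg _ _ h.le, mul_div_cancel₀ _ h.ne', mul_zero]

theorem exists_sign_scale (c : ℝ) :
    ∃ d : ℝ, 0 < d ∧ (c / d = -1 ∨ c / d = 0 ∨ c / d = 1) := by
  rcases lt_trichotomy c 0 with h | h | h
  · exact ⟨-c, by linarith, Or.inl (by rw [div_neg, div_self h.ne])⟩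
  · exact ⟨1, one_pos, by simp [h]⟩
  · exact ⟨c, h, by simp [h.ne']⟩

/-- every `f_L ∈ Y_{n₁,…,n_{L−1}}` admits a normalized representation with
first layer `F₁(t) = t·𝟙 + b¹` and source-channel coefficients that are sign vectors
`s^ℓ ∈ {−1,0,1}^{n_ℓ}` at every hidden layer `ℓ = 2,…,L−1`. -/
theorem deep_relu_normalized_form (L : ℕ) (hL : 2 ≤ L) (n : ℕ → ℕ) (f : ℝ → ℝ)
    (hf : IsDeepReLU L n f) :
    ∃ (F : (ℓ : ℕ) → ℝ → Fin (n ℓ) → ℝ)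
      (b1 : Fin (n 1) → ℝ)
      (A : (ℓ : ℕ) → Fin (n ℓ) → Fin (n (ℓ - 1)) → ℝ)
      (b s : (ℓ : ℕ) → Fin (n ℓ) → ℝ)
      (AL : Fin (n (L - 1)) → ℝ) (cL bL : ℝ),
      (∀ ℓ, 2 ≤ ℓ → ℓ ≤ L - 1 → ∀ i, s ℓ i = -1 ∨ s ℓ i = 0 ∨ s ℓ i = 1) ∧
      (∀ t i, F 1 t i = t + b1 i) ∧
      (∀ ℓ, 2 ≤ ℓ → ℓ ≤ L - 1 → ∀ t i,
        F ℓ t i = (∑ k, A ℓ i k * relu (F (ℓ - 1) t k)) + t * s ℓ i + b ℓ i) ∧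
      (∀ t, f t = (∑ k, AL k * relu (F (L - 1) t k)) + t * cL + bL) := by
  obtain ⟨F, A1, A, b, c, AL, cL, bL, h1, h2, h3⟩ := hf
  choose P Q R B hP using fun (ℓ : ℕ) (i : Fin (n ℓ)) =>
    relu_first_layer (Function.update c 1 A1 ℓ i) (b ℓ i)
  -- affine corrections carried by the previous layer (nonzero only at layer one)
  let q : (ℓ : ℕ) → Fin (n ℓ) → ℝ := fun ℓ i => if ℓ = 1 then Q ℓ i else 0
  let r : (ℓ : ℕ) → Fin (n ℓ) → ℝ := fun ℓ i => if ℓ = 1 then R ℓ i else 0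
  choose d hd hs using fun (ℓ : ℕ) (i : Fin (n ℓ)) =>
    exists_sign_scale (c ℓ i + ∑ k, A ℓ i k * q (ℓ - 1) k)
  let p : (ℓ : ℕ) → Fin (n ℓ) → ℝ := fun ℓ i => if ℓ = 1 then P ℓ i else d ℓ i
  let G : (ℓ : ℕ) → ℝ → Fin (n ℓ) → ℝ :=
    fun ℓ t i => if ℓ = 1 then t + B ℓ i else F ℓ t i / d ℓ i
  have key : ∀ ℓ t k, relu (F ℓ t k) = p ℓ k * relu (G ℓ t k) + t * q ℓ k + r ℓ k := by
    intro ℓ t k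
    by_cases h : ℓ = 1
    · subst h
      have := hP 1 k t
      rw [Function.update_self] at this
      simp only [p, q, r, G, if_true, h1, this]
    · simp only [p, q, r, G, if_neg h]
      rw [relu_pos_mul _ _ (hd ℓ k)]
      ring
  have sumkey : ∀ ℓ t (a : Fin (n ℓ) → ℝ), ∑ k, a k * relu (F ℓ t k) =
      ∑ k, a k * p ℓ k * relu (G ℓ t k) + t * ∑ k, a k * q ℓ k + ∑ k, a k * r ℓ k := by
    intro ℓ t a
    rw [Finset.mul_sum, ← Finset.sum_add_distrib, ← Finset.sum_add_distrib]
    refine Finset.sum_congr rfl fun k _ => ?_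
    rw [key]
    ring
  refine ⟨G, B 1, fun ℓ i k => A ℓ i k * p (ℓ - 1) k / d ℓ i,
    fun ℓ i => (b ℓ i + ∑ k, A ℓ i k * r (ℓ - 1) k) / d ℓ i,
    fun ℓ i => (c ℓ i + ∑ k, A ℓ i k * q (ℓ - 1) k) / d ℓ i,
    fun k => AL k * p (L - 1) k, cL + ∑ k, AL k * q (L - 1) k,
    bL + ∑ k, AL k * r (L - 1) k, fun ℓ _ _ i => hs ℓ i, fun t i => by simp [G], ?_, ?_⟩
  · intro ℓ hℓ hℓ' t i
    have hne : ℓ ≠ 1 := by omega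
    have e : G ℓ t i = F ℓ t i / d ℓ i := by simp only [G, if_neg hne]
    rw [e, h2 ℓ hℓ hℓ', sumkey]
    have e2 : ∑ k, A ℓ i k * p (ℓ - 1) k / d ℓ i * relu (G (ℓ - 1) t k) =
        (∑ k, A ℓ i k * p (ℓ - 1) k * relu (G (ℓ - 1) t k)) / d ℓ i := by
      rw [Finset.sum_div]
      exact Finset.sum_congr rfl fun k _ => by ring
    rw [e2]
    ring
  · intro t
    rw [h3, sumkey]
    ring
end
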